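/- arXiv:1404.3876 — 4 statements merged into one kernel-verified Lean document; each statement's English description precedes it below -/
import Mathlib

section
/- Let M be a d×n integer matrix of full row rank d all of whose d×d minors lie in {-1,0,1} (a unimodular matrix), and let L = M·Mᵀ. Then the Lebesgue volume of the zonotope Z(M), the Lebesgue volume of the zonotope Z(L), the determinant det(L), and the product λ₁⋯λ_d of the (real) eigenvalues of the symmetric matrix L are all equal; in particular vol Z(M) = vol Z(L). -/
open MeasureTheory

/-- The zonotope generated by a `d × n` real matrix: the image of the unit cube
`[0,1]^n` under the linear map `x ↦ M x`. -/
def zonotope {d n : ℕ} (M : Matrix (Fin d) (Fin n) ℝ) : Set (Fin d → ℝ) :=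
  {y | ∃ x : Fin n → ℝ, (∀ i, x i ∈ Set.Icc (0 : ℝ) 1) ∧ y = M.mulVec x}


lemma zz_int_of_tight {d n : ℕ} (M : Matrix (Fin d) (Fin n) ℝ)
    (hint : ∀ i j, ∃ z : ℤ, M i j = (z : ℝ))
    (huni : ∀ f : Fin d → Fin n, Function.Injective f →
      (M.submatrix id f).det ∈ ({-1, 0, 1} : Set ℝ))
    (u : Fin d → ℝ)
    (hs : Submodule.span ℝ (M.col '' {i | ∃ k : ℤ, Matrix.vecMul u M i = k}) = ⊤) :
    ∃ v : Fin d → ℤ, u = fun i => (v i : ℝ) := by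
  have hex := Submodule.exists_fun_fin_finrank_span_eq ℝ
    (M.col '' {i | ∃ k : ℤ, Matrix.vecMul u M i = k})
  rw [hs, finrank_top, Module.finrank_fin_fun] at hex
  obtain ⟨g, hg, -, hli⟩ := hex
  choose f hf hfg using hg
  choose k hk using hf
  choose Mz hMz using hint
  have hinj : Function.Injective f := by
    intro i j hij
    apply hli.injective
    rw [← hfg, ← hfg, hij]
  let B : Matrix (Fin d) (Fin d) ℤ := Matrix.of fun i j => Mz i (f j)
  have hB : M.submatrix id f = B.map (Int.castRingHom ℝ) := by
    ext i j; simp [B, hMz]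
  have hunit : IsUnit (M.submatrix id f) := by
    rw [← Matrix.linearIndependent_cols_iff_isUnit]
    have hcol : (M.submatrix id f).col = g := by
      ext j i
      rw [← hfg]; rfl
    rw [hcol]; exact hli
  have hdet : (M.submatrix id f).det = B.det := by
    rw [hB]; exact (RingHom.map_det (Int.castRingHom ℝ) B).symm
  have hBu : IsUnit B.det := by
    have h1 := huni f hinj
    have h2 : (M.submatrix id f).det ≠ 0 := ((Matrix.isUnit_iff_isUnit_det _).1 hunit).ne_zero
    simp only [Set.mem_insert_iff, Set.mem_singleton_iff] at h1
    rw [hdet] at h1 h2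
    rw [Int.isUnit_iff]
    rcases h1 with h | h | h
    · right; exact_mod_cast h
    · exact absurd h h2
    · left; exact_mod_cast h
  refine ⟨Matrix.vecMul k B⁻¹, ?_⟩
  have e1 : Matrix.vecMul u (M.submatrix id f) = fun j => (k j : ℝ) := by
    ext j; rw [← hk j]; rfl
  have e2 : (M.submatrix id f) * (B⁻¹).map (Int.castRingHom ℝ) = 1 := by
    rw [hB, ← Matrix.map_mul, Matrix.mul_nonsing_inv _ hBu]
    simp
  calc u = Matrix.vecMul u ((M.submatrix id f) * (B⁻¹).map (Int.castRingHom ℝ)) := by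
        rw [e2, Matrix.vecMul_one]
    _ = Matrix.vecMul (fun j => (k j : ℝ)) ((B⁻¹).map (Int.castRingHom ℝ)) := by
        rw [← Matrix.vecMul_vecMul, e1]
    _ = _ := by
        ext i
        simp [Matrix.vecMul, dotProduct]

/-- piecewise linear interpolation of `s(s+1)/2`. -/
noncomputable def zzphi (s : ℝ) : ℝ := (⌊s⌋ + 1) * s - ⌊s⌋ * (⌊s⌋ + 1) / 2

lemma zzphi_affine (k : ℤ) (s : ℝ) (h1 : (k : ℝ) ≤ s) (h2 : s ≤ k + 1) :
    zzphi s = (k + 1) * s - k * (k + 1) / 2 := by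
  rcases h2.lt_or_eq with h | h
  · have : ⌊s⌋ = k := Int.floor_eq_iff.2 ⟨h1, h⟩
    rw [zzphi, this]
  · have : ⌊s⌋ = k + 1 := by rw [h]; simp
    rw [zzphi, this, h]; push_cast; ring

lemma zzphi_int (k : ℤ) : zzphi k = k * (k + 1) / 2 := by
  rw [zzphi_affine k k le_rfl (by linarith)]; ring

lemma zzphi_near (k : ℤ) (h : ℝ) (hh : |h| ≤ 1) : zzphi (k + h) - zzphi k = k * h + max h 0 := by
  rw [abs_le] at hh
  rw [zzphi_int]
  rcases le_total 0 h with h0 | h0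
  · rw [zzphi_affine k _ (by linarith) (by linarith), max_eq_left h0]; ring
  · rw [zzphi_affine (k-1) _ (by push_cast; linarith) (by push_cast; linarith), max_eq_right h0]
    push_cast; ring

/-- objective -/
noncomputable def zzF {n : ℕ} (x a : Fin n → ℝ) : ℝ := ∑ i, (zzphi (a i) - a i * x i)

lemma zzF_affine {n : ℕ} (x a w : Fin n → ℝ) (τ : ℝ)
    (h : ∀ i, (⌊a i⌋ : ℝ) ≤ a i + τ * w i ∧ a i + τ * w i ≤ ⌊a i⌋ + 1) :
    zzF x (a + τ • w) = zzF x a + τ * ∑ i, ((⌊a i⌋ + 1 - x i) * w i) := by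
  simp only [zzF]
  rw [Finset.mul_sum, ← Finset.sum_add_distrib]
  refine Finset.sum_congr rfl fun i _ => ?_
  simp only [Pi.add_apply, Pi.smul_apply, smul_eq_mul]
  rw [zzphi_affine ⌊a i⌋ _ (h i).1 (h i).2, zzphi]
  ring

lemma zz_inj {d n : ℕ} (M : Matrix (Fin d) (Fin n) ℝ) (hrank : M.rank = d) (s : Fin d → ℝ)
    (h : Matrix.vecMul s M = 0) : s = 0 := by
  have hli : LinearIndependent ℝ M.row := by
    rw [linearIndependent_iff_card_eq_finrank_span, Fintype.card_fin, Set.finrank,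
      ← Matrix.rank_eq_finrank_span_row, hrank]
  exact Matrix.vecMul_injective_iff.2 hli (by simpa using h)

lemma zz_round {d n : ℕ} (M : Matrix (Fin d) (Fin n) ℝ)
    (hint : ∀ i j, ∃ z : ℤ, M i j = (z : ℝ)) (hrank : M.rank = d)
    (huni : ∀ f : Fin d → Fin n, Function.Injective f →
      (M.submatrix id f).det ∈ ({-1, 0, 1} : Set ℝ)) (x : Fin n → ℝ) (N : ℕ) :
    ∀ u : Fin d → ℝ, {i | ¬ ∃ k : ℤ, Matrix.vecMul u M i = k}.ncard ≤ N →
    ∃ v : Fin d → ℤ, zzF x (Matrix.vecMul (fun i => (v i : ℝ)) M) ≤ zzF x (Matrix.vecMul u M) := by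
  induction N using Nat.strong_induction_on with
  | _ N ih =>
  intro u hN
  by_cases hs : Submodule.span ℝ (M.col '' {i | ∃ k : ℤ, Matrix.vecMul u M i = k}) = ⊤
  · obtain ⟨v, hv⟩ := zz_int_of_tight M hint huni u hs
    exact ⟨v, by rw [← hv]⟩
  obtain ⟨ℓ, hℓ0, hℓ⟩ := Submodule.exists_le_ker_of_lt_top _ (lt_top_iff_ne_top.2 hs)
  obtain ⟨s, hs0, hsw, hσ⟩ : ∃ s : Fin d → ℝ, s ≠ 0 ∧
      (∀ i, (∃ k : ℤ, Matrix.vecMul u M i = k) → Matrix.vecMul s M i = 0) ∧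
      ∑ i, ((⌊Matrix.vecMul u M i⌋ + 1 - x i) * Matrix.vecMul s M i) ≤ 0 := by
    obtain ⟨s, hs⟩ := (dotProductEquiv ℝ (Fin d)).surjective ℓ
    have h0 : s ≠ 0 := by rintro rfl; exact hℓ0 (by rw [← hs]; simp)
    have hw : ∀ i, (∃ k : ℤ, Matrix.vecMul u M i = k) → Matrix.vecMul s M i = 0 := by
      intro i hi
      have := hℓ (Submodule.subset_span ⟨i, hi, rfl⟩)
      rw [LinearMap.mem_ker, ← hs] at this
      exact this
    rcases le_total (∑ i, ((⌊Matrix.vecMul u M i⌋ + 1 - x i) * Matrix.vecMul s M i)) 0 with h | h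
    · exact ⟨s, h0, hw, h⟩
    · refine ⟨-s, neg_ne_zero.2 h0, fun i hi => by simp [Matrix.neg_vecMul, hw i hi], ?_⟩
      simpa [Matrix.neg_vecMul] using h
  set a := Matrix.vecMul u M with ha
  set w := Matrix.vecMul s M with hw
  have hw0 : w ≠ 0 := fun h => hs0 (zz_inj M hrank s h)
  obtain ⟨j0, hj0⟩ : ∃ j, w j ≠ 0 := by
    by_contra! h; exact hw0 (funext h)
  let T : Fin n → ℝ := fun j => if 0 < w j then (⌊a j⌋ + 1 - a j) / w j else (⌊a j⌋ - a j) / w j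
  obtain ⟨j, hj, hmin⟩ := Finset.exists_min_image (Finset.univ.filter fun j => w j ≠ 0) T
    ⟨j0, by simp [hj0]⟩
  simp only [Finset.mem_filter, Finset.mem_univ, true_and] at hj hmin
  have hlt : ∀ i, (⌊a i⌋ : ℝ) ≤ a i ∧ a i < ⌊a i⌋ + 1 := fun i =>
    ⟨Int.floor_le _, Int.lt_floor_add_one _⟩
  have hT0 : 0 ≤ T j := by
    simp only [T]
    split_ifs with h
    · exact div_nonneg (by linarith [hlt j]) h.le
    · exact div_nonneg_of_nonpos (by linarith [hlt j]) (not_lt.1 h)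
  have hb : ∀ i, (⌊a i⌋ : ℝ) ≤ a i + T j * w i ∧ a i + T j * w i ≤ ⌊a i⌋ + 1 := by
    intro i
    rcases lt_trichotomy (w i) 0 with h | h | h
    · have h1 := hmin i h.ne
      have h2 : T i = (⌊a i⌋ - a i) / w i := if_neg (not_lt.2 h.le)
      rw [h2, le_div_iff_of_neg h] at h1
      constructor
      · linarith
      · nlinarith [hlt i]
    · rw [h]; constructor <;> linarith [hlt i]
    · have h1 := hmin i h.ne'
      have h2 : T i = (⌊a i⌋ + 1 - a i) / w i := if_pos h
      rw [h2, le_div_iff₀ h] at h1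
      constructor
      · nlinarith [hlt i]
      · linarith
  have hnew : Matrix.vecMul (u + T j • s) M = a + T j • w := by
    rw [Matrix.add_vecMul, Matrix.smul_vecMul]
  have hj' : ∃ k : ℤ, a j + T j * w j = k := by
    simp only [T]
    split_ifs with h
    · exact ⟨⌊a j⌋ + 1, by rw [div_mul_cancel₀ _ hj]; push_cast; ring⟩
    · exact ⟨⌊a j⌋, by rw [div_mul_cancel₀ _ hj]; ring⟩
  have hlt' : {i | ¬ ∃ k : ℤ, Matrix.vecMul (u + T j • s) M i = k}.ncard < N := by
    refine lt_of_lt_of_le (Set.ncard_lt_ncard ?_ (Set.toFinite _)) hN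
    rw [hnew]
    refine ⟨fun i hi hk => hi ?_, fun hsub => ?_⟩
    · simp only [Pi.add_apply, Pi.smul_apply, hsw i hk, smul_zero, add_zero]
      exact hk
    · have : j ∈ {i | ¬ ∃ k : ℤ, a i = k} := fun hk => hj (hsw j hk)
      exact hsub this (by simpa using hj')
  obtain ⟨v, hv⟩ := ih _ hlt' (u + T j • s) le_rfl
  refine ⟨v, hv.trans ?_⟩
  rw [hnew, zzF_affine x a w (T j) hb]
  nlinarith [mul_nonneg hT0 (neg_nonneg.2 hσ)]

lemma zz_exists_min {d n : ℕ} (M : Matrix (Fin d) (Fin n) ℝ)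
    (hint : ∀ i j, ∃ z : ℤ, M i j = (z : ℝ)) (x : Fin n → ℝ) :
    ∃ v : Fin d → ℤ, ∀ v' : Fin d → ℤ, zzF x (Matrix.vecMul (fun i => (v i : ℝ)) M) ≤
      zzF x (Matrix.vecMul (fun i => (v' i : ℝ)) M) := by
  choose Mz hMz using hint
  let A : (Fin d → ℤ) → (Fin n → ℤ) := fun v => Matrix.vecMul v (Matrix.of Mz)
  let G : (Fin n → ℤ) → ℝ := fun a => zzF x (fun i => (a i : ℝ))
  have hA : ∀ v : Fin d → ℤ, zzF x (Matrix.vecMul (fun i => (v i : ℝ)) M) = G (A v) := by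
    intro v
    simp only [G, A]
    congr 1
    ext i
    simp [Matrix.vecMul, dotProduct, hMz]
  have hG : ∀ a, 2 * G a = ∑ i, ((a i + 1/2 - x i)^2 - (1/2 - x i)^2) := by
    intro a
    simp only [G, zzF, zzphi_int, Finset.mul_sum]
    refine Finset.sum_congr rfl fun i _ => ?_
    ring
  let C : ℝ := 2 * G (A 0) + ∑ i, (1/2 - x i)^2
  have hfin : {a | G a ≤ G (A 0)}.Finite := by
    refine (Set.finite_Icc (fun i => ⌊x i - 1/2 - (C + 1)⌋) (fun i => ⌈x i - 1/2 + (C+1)⌉)).subset ?_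
    intro a ha
    have h1 : ∑ i, (a i + 1/2 - x i)^2 ≤ C := by
      have := hG a
      rw [Finset.sum_sub_distrib] at this
      have h2 : G a ≤ G (A 0) := ha
      simp only [C]; linarith
    have h2 : ∀ i, (a i + 1/2 - x i)^2 ≤ C := fun i =>
      (Finset.single_le_sum (f := fun i => (a i + 1/2 - x i)^2) (fun i _ => sq_nonneg _)
        (Finset.mem_univ i)).trans h1
    constructor
    · intro i
      have := h2 i
      have : x i - 1/2 - (C + 1) ≤ a i := by nlinarith
      have h3 := Int.floor_le (x i - 1/2 - (C + 1))
      exact_mod_cast h3.trans this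
    · intro i
      have := h2 i
      have : a i ≤ x i - 1/2 + (C + 1) := by nlinarith
      have h3 := Int.le_ceil (x i - 1/2 + (C + 1))
      exact_mod_cast this.trans h3
  obtain ⟨b, ⟨hb1, v, rfl⟩, hb⟩ := Set.exists_min_image ({a | G a ≤ G (A 0)} ∩ Set.range A) G
    (hfin.inter_of_left _) ⟨A 0, le_refl (G (A 0)), 0, rfl⟩
  refine ⟨v, fun v' => ?_⟩
  rw [hA, hA]
  rcases le_total (G (A v')) (G (A 0)) with h | h
  · exact hb _ ⟨h, v', rfl⟩
  · exact le_trans hb1 h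

lemma zz_zono_eq {d n : ℕ} (M : Matrix (Fin d) (Fin n) ℝ) :
    zonotope M = M.mulVecLin '' (Set.Icc 0 1) := by
  ext y
  simp only [zonotope, Set.mem_ofPred_eq, Set.mem_image, Matrix.mulVecLin_apply]
  constructor
  · rintro ⟨x, hx, rfl⟩
    exact ⟨x, ⟨fun i => (hx i).1, fun i => (hx i).2⟩, rfl⟩
  · rintro ⟨x, hx, rfl⟩
    exact ⟨x, fun i => ⟨hx.1 i, hx.2 i⟩, rfl⟩

lemma zz_zono_compact {d n : ℕ} (M : Matrix (Fin d) (Fin n) ℝ) : IsCompact (zonotope M) := by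
  rw [zz_zono_eq]
  exact isCompact_Icc.image (LinearMap.continuous_of_finiteDimensional _)

lemma zz_zono_convex {d n : ℕ} (M : Matrix (Fin d) (Fin n) ℝ) : Convex ℝ (zonotope M) := by
  rw [zz_zono_eq]
  exact (convex_Icc _ _).linear_image _

lemma zz_detL {d n : ℕ} (M : Matrix (Fin d) (Fin n) ℝ) (hrank : M.rank = d) :
    0 < (M * M.transpose).det := by
  have h1 : (M * M.transpose).PosSemidef := by
    simpa using Matrix.posSemidef_self_mul_conjTranspose M
  refine lt_of_le_of_ne h1.det_nonneg (Ne.symm ?_)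
  have h2 : (M * M.transpose).rank = d := by rw [Matrix.rank_self_mul_transpose, hrank]
  intro h0
  obtain ⟨v, hv, h⟩ := Matrix.exists_vecMul_eq_zero_iff.2 h0
  exact hv (zz_inj _ h2 v h)

lemma zz_cover {d n : ℕ} (M : Matrix (Fin d) (Fin n) ℝ)
    (hint : ∀ i j, ∃ z : ℤ, M i j = (z : ℝ)) (hrank : M.rank = d)
    (huni : ∀ f : Fin d → Fin n, Function.Injective f →
      (M.submatrix id f).det ∈ ({-1, 0, 1} : Set ℝ)) (y : Fin d → ℝ) :
    ∃ v : Fin d → ℤ, y - (M * M.transpose).mulVec (fun i => (v i : ℝ)) ∈ zonotope M := by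
  obtain ⟨x, hx⟩ : ∃ x, M.mulVec x = y := by
    refine ⟨M.transpose.mulVec ((M * M.transpose)⁻¹.mulVec y), ?_⟩
    rw [Matrix.mulVec_mulVec, Matrix.mulVec_mulVec,
      Matrix.mul_nonsing_inv _ (zz_detL M hrank).ne'.isUnit, Matrix.one_mulVec]
  obtain ⟨v, hv⟩ := zz_exists_min M hint x
  have hmin : ∀ u, zzF x (Matrix.vecMul (fun i => (v i : ℝ)) M) ≤ zzF x (Matrix.vecMul u M) := by
    intro u
    obtain ⟨v', hv'⟩ := zz_round M hint hrank huni x _ u le_rfl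
    exact (hv v').trans hv'
  refine ⟨v, ?_⟩
  by_contra hnot
  obtain ⟨f, c, hf1, hf2⟩ := geometric_hahn_banach_closed_point (zz_zono_convex M)
    (zz_zono_compact M).isClosed hnot
  obtain ⟨t, ht⟩ := (dotProductEquiv ℝ (Fin d)).surjective f.toLinearMap
  have hft : ∀ z, f z = t ⬝ᵥ z := by
    intro z
    have : f.toLinearMap z = t ⬝ᵥ z := by rw [← ht]; rfl
    exact this
  set w := Matrix.vecMul t M with hw
  choose Mz hMz using hint
  obtain ⟨a, ha⟩ : ∃ a : Fin n → ℤ, Matrix.vecMul (fun i => (v i : ℝ)) M = fun i => (a i : ℝ) := by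
    refine ⟨Matrix.vecMul v (Matrix.of Mz), ?_⟩
    ext i
    simp [Matrix.vecMul, dotProduct, hMz]
  have hmax : ∑ i, max (w i) 0 < c := by
    have := hf1 (M.mulVec fun i => if 0 ≤ w i then 1 else 0)
      ⟨_, fun i => by split_ifs <;> simp, rfl⟩
    rw [hft, Matrix.dotProduct_mulVec, ← hw] at this
    refine lt_of_eq_of_lt ?_ this
    simp only [dotProduct]
    refine Finset.sum_congr rfl fun i _ => ?_
    split_ifs with h
    · rw [max_eq_left h, mul_one]
    · rw [max_eq_right (not_le.1 h).le, mul_zero]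
  have hval : f (y - (M * M.transpose).mulVec (fun i => (v i : ℝ))) = ∑ i, w i * (x i - a i) := by
    rw [hft, ← hx, ← Matrix.mulVec_mulVec, ← Matrix.mulVec_sub, Matrix.dotProduct_mulVec, ← hw,
      Matrix.mulVec_transpose, ha]
    rfl
  rw [hval] at hf2
  obtain ⟨ε, hε, hε1⟩ : ∃ ε : ℝ, 0 < ε ∧ ∀ i, |ε * w i| ≤ 1 := by
    have hp : 0 < 1 + ∑ i, |w i| := by positivity
    refine ⟨1 / (1 + ∑ i, |w i|), by positivity, fun i => ?_⟩
    have := Finset.single_le_sum (f := fun i => |w i|) (fun i _ => abs_nonneg _) (Finset.mem_univ i)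
    rw [abs_mul, abs_of_pos (by positivity), one_div_mul_eq_div, div_le_one hp]
    linarith
  have key := hmin ((fun i => (v i : ℝ)) + ε • t)
  rw [Matrix.add_vecMul, Matrix.smul_vecMul, ha, ← hw] at key
  have hdiff : zzF x ((fun i => (a i : ℝ)) + ε • w) - zzF x (fun i => (a i : ℝ)) =
      ε * (∑ i, max (w i) 0 - ∑ i, w i * (x i - a i)) := by
    simp only [zzF]
    rw [← Finset.sum_sub_distrib, ← Finset.sum_sub_distrib, Finset.mul_sum]
    refine Finset.sum_congr rfl fun i _ => ?_
    have h := zzphi_near (a i) (ε * w i) (hε1 i)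
    have h3 : max (ε * w i) 0 = ε * max (w i) 0 := by
      rw [mul_max_of_nonneg _ _ hε.le, mul_zero]
    simp only [Pi.add_apply, Pi.smul_apply, smul_eq_mul]
    rw [h3] at h
    linear_combination h
  nlinarith

lemma zz_disj {d n : ℕ} (M : Matrix (Fin d) (Fin n) ℝ)
    (hint : ∀ i j, ∃ z : ℤ, M i j = (z : ℝ)) (v : Fin d → ℤ) (y : Fin d → ℝ)
    (h1 : y ∈ zonotope M)
    (h2 : y - (M * M.transpose).mulVec (fun i => (v i : ℝ)) ∈ zonotope M) :
    (fun i => (v i : ℝ)) ⬝ᵥ y = ∑ i, max (Matrix.vecMul (fun i => (v i : ℝ)) M i) 0 := by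
  obtain ⟨x, hx, rfl⟩ := h1
  obtain ⟨x', hx', he⟩ := h2
  choose Mz hMz using hint
  obtain ⟨a, ha⟩ : ∃ a : Fin n → ℤ, Matrix.vecMul (fun i => (v i : ℝ)) M = fun i => (a i : ℝ) := by
    refine ⟨Matrix.vecMul v (Matrix.of Mz), ?_⟩
    ext i
    simp [Matrix.vecMul, dotProduct, hMz]
  have he2 := congrArg (fun z => (fun i => (v i : ℝ)) ⬝ᵥ z) he
  rw [← Matrix.mulVec_mulVec, ← Matrix.mulVec_sub, Matrix.dotProduct_mulVec,
    Matrix.dotProduct_mulVec, Matrix.mulVec_transpose, ha] at he2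
  rw [Matrix.dotProduct_mulVec, ha]
  simp only [dotProduct, Pi.sub_apply] at he2 ⊢
  -- each term is nonneg
  have hA : ∀ i, (a i : ℝ) * x i ≤ max (a i : ℝ) 0 := by
    intro i
    obtain ⟨p, q⟩ := hx i
    rcases le_total (a i : ℝ) 0 with h | h
    · rw [max_eq_right h]; nlinarith
    · rw [max_eq_left h]; nlinarith
  have hB : ∀ i, max (a i : ℝ) 0 ≤ (a i : ℝ) * x' i + a i * a i := by
    intro i
    obtain ⟨p, q⟩ := hx' i
    rcases lt_trichotomy (a i) 0 with h | h | h
    · have : (a i : ℝ) ≤ -1 := by exact_mod_cast (by omega : a i ≤ -1)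
      rw [max_eq_right (by linarith)]; nlinarith
    · simp [h]
    · have : (1 : ℝ) ≤ a i := by exact_mod_cast h
      rw [max_eq_left (by linarith)]; nlinarith
  have sA := Finset.sum_le_sum (s := Finset.univ) fun i _ => hA i
  have sB := Finset.sum_le_sum (s := Finset.univ) fun i _ => hB i
  have : ∑ i, ((a i : ℝ) * x' i + a i * a i) = ∑ i, (a i : ℝ) * x i := by
    rw [Finset.sum_add_distrib, ← he2, ← Finset.sum_add_distrib]
    exact Finset.sum_congr rfl fun i _ => by ring
  linarith

lemma zz_hyper {d : ℕ} (v : Fin d → ℝ) (hv : v ≠ 0) (L : Matrix (Fin d) (Fin d) ℝ)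
    (hL : L.det ≠ 0) (c : ℝ) :
    volume {t : Fin d → ℝ | v ⬝ᵥ L.mulVec t = c} = 0 := by
  let ℓ : (Fin d → ℝ) →ₗ[ℝ] ℝ := (dotProductEquiv ℝ (Fin d) v) ∘ₗ L.mulVecLin
  have hl : ∀ t, ℓ t = v ⬝ᵥ L.mulVec t := fun t => rfl
  let S : AffineSubspace ℝ (Fin d → ℝ) := (AffineSubspace.mk' c ⊥).comap ℓ.toAffineMap
  have hS : (S : Set (Fin d → ℝ)) = {t : Fin d → ℝ | v ⬝ᵥ L.mulVec t = c} := by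
    ext t
    simp [S, AffineSubspace.mem_mk', hl, sub_eq_zero]
  rw [← hS]
  apply Measure.addHaar_affineSubspace
  intro htop
  have hall : ∀ t, v ⬝ᵥ L.mulVec t = c := by
    intro t
    have : t ∈ (S : Set (Fin d → ℝ)) := by rw [htop]; trivial
    rwa [hS] at this
  have hc : c = 0 := by rw [← hall 0]; simp
  apply hv
  have h := hall (L⁻¹.mulVec v)
  rw [Matrix.mulVec_mulVec, Matrix.mul_nonsing_inv _ hL.isUnit, Matrix.one_mulVec, hc] at h
  exact dotProduct_self_eq_zero.1 h

lemma zz_vol_cube (d : ℕ) : volume (Set.Icc (0 : Fin d → ℝ) 1) = 1 := by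
  rw [Real.volume_Icc_pi]; simp

lemma zz_fund {d n : ℕ} (M : Matrix (Fin d) (Fin n) ℝ)
    (hint : ∀ i j, ∃ z : ℤ, M i j = (z : ℝ)) (hrank : M.rank = d)
    (huni : ∀ f : Fin d → Fin n, Function.Injective f →
      (M.submatrix id f).det ∈ ({-1, 0, 1} : Set ℝ)) :
    volume ((M * M.transpose).mulVecLin ⁻¹' zonotope M) = 1 := by
  have hdet := (zz_detL M hrank).ne'
  have hmem : ∀ g : Fin d → ℝ, g ∈ Submodule.span ℤ (Set.range (Pi.basisFun ℝ (Fin d))) ↔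
      ∃ v : Fin d → ℤ, g = fun i => (v i : ℝ) := by
    intro g
    rw [Module.Basis.mem_span_iff_repr_mem]
    constructor
    · intro h
      choose v hv using h
      refine ⟨v, ?_⟩
      ext i
      simpa using (hv i).symm
    · rintro ⟨v, rfl⟩ i
      exact ⟨v i, by simp⟩
  have hcount : Countable (Submodule.span ℤ (Set.range (Pi.basisFun ℝ (Fin d)))).toAddSubgroup := by
    change Countable (Submodule.span ℤ (Set.range (Pi.basisFun ℝ (Fin d))))
    infer_instance
  have hfd : IsAddFundamentalDomain
      (Submodule.span ℤ (Set.range (Pi.basisFun ℝ (Fin d)))).toAddSubgroup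
      ((M * M.transpose).mulVecLin ⁻¹' zonotope M) volume := by
    refine IsAddFundamentalDomain.mk'' ?_ ?_ ?_ ?_
    · exact ((zz_zono_compact M).isClosed.preimage
        (LinearMap.continuous_of_finiteDimensional _)).measurableSet.nullMeasurableSet
    · refine Filter.Eventually.of_forall fun t => ?_
      obtain ⟨v, hv⟩ := zz_cover M hint hrank huni ((M * M.transpose).mulVec t)
      refine ⟨-⟨fun i => (v i : ℝ), (hmem _).2 ⟨v, rfl⟩⟩, ?_⟩
      rw [Set.mem_preimage, Matrix.mulVecLin_apply]
      rw [← Matrix.mulVec_sub] at hv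
      have hE : (-⟨fun i => (v i : ℝ), (hmem _).2 ⟨v, rfl⟩⟩ :
          (Submodule.span ℤ (Set.range (Pi.basisFun ℝ (Fin d)))).toAddSubgroup) +ᵥ t =
          t - fun i => (v i : ℝ) := by
        rw [AddSubgroup.vadd_def, vadd_eq_add, AddSubgroup.coe_neg]
        abel
      rw [hE]
      exact hv
    · rintro ⟨g, hg⟩ hg0
      obtain ⟨v, rfl⟩ := (hmem g).1 hg
      have hv0 : (fun i => (v i : ℝ)) ≠ 0 := fun h => hg0 (Subtype.ext h)
      refine measure_mono_null ?_ (zz_hyper _ hv0 _ hdet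
        (∑ i, max (Matrix.vecMul (fun i => (v i : ℝ)) M i) 0))
      rintro t ⟨⟨s, hs, rfl⟩, ht⟩
      refine zz_disj M hint v _ ht ?_
      rw [← Matrix.mulVec_sub]
      have hE : ((fun i => (v i : ℝ)) + s) - (fun i => (v i : ℝ)) = s := by abel
      change (M * M.transpose).mulVec (((fun i => (v i : ℝ)) + s) - (fun i => (v i : ℝ))) ∈ _
      rw [hE]
      exact hs
    · intro g
      exact (measurePreserving_vadd g volume).quasiMeasurePreserving
  rw [hfd.measure_eq (ZSpan.isAddFundamentalDomain' (Pi.basisFun ℝ (Fin d)) volume),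
    ZSpan.fundamentalDomain_pi_basisFun, volume_pi, Measure.pi_pi]
  simp

/-- **Polyhedral matroid matrix tree theorem (full rank case).**
For a full row rank unimodular integer matrix `M` with `L = M Mᵀ`, the Lebesgue
volume of `Z(M)`, the volume of `Z(L)`, `det L`, and the product of the (real)
eigenvalues of the symmetric matrix `L` all coincide. -/
theorem stmt0 (d n : ℕ) (M : Matrix (Fin d) (Fin n) ℝ)
    (hint : ∀ i j, ∃ z : ℤ, M i j = (z : ℝ))
    (hrank : M.rank = d)
    (huni : ∀ f : Fin d → Fin n, Function.Injective f →
      (M.submatrix id f).det ∈ ({-1, 0, 1} : Set ℝ))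
    (L : Matrix (Fin d) (Fin d) ℝ) (hLdef : L = M * M.transpose)
    (hL : L.IsHermitian) :
    volume (zonotope M) = volume (zonotope L) ∧
    volume (zonotope L) = ENNReal.ofReal L.det ∧
    L.det = ∏ i, hL.eigenvalues i := by
  subst hLdef
  have hpos := zz_detL M hrank
  have h1 : volume (zonotope (M * M.transpose)) = ENNReal.ofReal (M * M.transpose).det := by
    rw [zz_zono_eq, Measure.addHaar_image_linearMap, zz_vol_cube, mul_one, ← Matrix.toLin'_apply',
      LinearMap.det_toLin', abs_of_pos hpos]
  have h2 : volume (zonotope M) = ENNReal.ofReal (M * M.transpose).det := by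
    have hsurj : Function.Surjective (M * M.transpose).mulVecLin := by
      intro y
      refine ⟨(M * M.transpose)⁻¹.mulVec y, ?_⟩
      rw [Matrix.mulVecLin_apply, Matrix.mulVec_mulVec,
        Matrix.mul_nonsing_inv _ hpos.ne'.isUnit, Matrix.one_mulVec]
    rw [← Set.image_preimage_eq (zonotope M) hsurj, Measure.addHaar_image_linearMap,
      zz_fund M hint hrank huni, mul_one, ← Matrix.toLin'_apply',
      LinearMap.det_toLin', abs_of_pos hpos]
  exact ⟨h2.trans h1.symm, h1, by simpa using hL.det_eq_prod_eigenvalues⟩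
end

section
/- Let G be a connected simple graph on n vertices with exactly s spanning trees, and let L be the Laplacian matrix of G, with nonzero eigenvalues λ₁, …, λ_{n-1} (counted with multiplicity). Then λ₁⋯λ_{n-1} = n·s. -/
open Matrix

def MTFlow {n : ℕ} (r : Fin n) (f : Fin n → Fin n) : Prop := ∀ v, ∃ k, f^[k] v = r

def mtMat {n : ℕ} (r : Fin n) (f : Fin n → Fin n) : Matrix (Fin n) (Fin n) ℝ :=
  fun v => if v = r then Pi.single r 1 else Pi.single v 1 - Pi.single (f v) 1

theorem mt_det_zero {n : ℕ} (r : Fin n) (f : Fin n → Fin n) (hf : f r = r) (h : ¬ MTFlow r f) :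
    (mtMat r f).det = 0 := by
  classical
  rw [← Matrix.exists_mulVec_eq_zero_iff]
  refine ⟨fun v => if ∃ k, f^[k] v = r then 0 else 1, ?_, ?_⟩
  · intro h0
    apply h
    intro v
    have := congrFun h0 v
    by_contra hv
    simp [hv] at this
  · funext v
    have key : (∃ k, f^[k] (f v) = r) ↔ ∃ k, f^[k] v = r := by
      constructor
      · rintro ⟨k, hk⟩; exact ⟨k+1, by simpa using hk⟩
      · rintro ⟨k, hk⟩
        refine ⟨k, ?_⟩
        rw [← Function.iterate_succ_apply, Function.iterate_succ_apply', hk, hf]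
    simp only [Matrix.mulVec, mtMat]
    by_cases hv : v = r
    · subst hv
      have : ∃ k, f^[k] v = v := ⟨0, rfl⟩
      simp [this]
    · simp only [hv, if_false, sub_dotProduct, single_one_dotProduct, key]
      simp

theorem mt_det_one {n : ℕ} (r : Fin n) (f : Fin n → Fin n) (h : MTFlow r f) :
    (mtMat r f).det = 1 := by
  classical
  set N : Matrix (Fin n) (Fin n) ℝ := fun v => if v = r then 0 else Pi.single (f v) 1 with hN
  have e : mtMat r f = 1 - N := by
    ext v w
    rw [Matrix.sub_apply, Matrix.one_apply]
    by_cases hv : v = r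
    · simp [mtMat, hN, hv, Pi.single_apply, eq_comm (a := w)]
    · simp [mtMat, hN, hv, Pi.single_apply, eq_comm (a := w)]
  have row : ∀ k v, f^[k] v = r → ∀ m, k < m → ∀ w, (N ^ m) v w = 0 := by
    intro k
    induction k with
    | zero =>
      intro v hv m hm w
      obtain ⟨m, rfl⟩ : ∃ m', m = m' + 1 := ⟨m - 1, by omega⟩
      simp at hv
      rw [pow_succ', Matrix.mul_apply]
      simp [hN, hv]
    | succ k ih =>
      intro v hv m hm w
      obtain ⟨m, rfl⟩ : ∃ m', m = m' + 1 := ⟨m - 1, by omega⟩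
      rw [pow_succ', Matrix.mul_apply]
      by_cases hvr : v = r
      · simp [hN, hvr]
      · have := ih (f v) (by simpa using hv) m (by omega) w
        simpa [hN, hvr, Pi.single_apply] using this
  have hnil : IsNilpotent N := by
    choose k hk using h
    refine ⟨(∑ v, k v) + 1, ?_⟩
    ext v w
    refine row (k v) v (hk v) _ ?_ w
    have := Finset.single_le_sum (f := k) (fun i _ => Nat.zero_le _) (Finset.mem_univ v)
    omega
  have hc := (Matrix.isNilpotent_charpoly_sub_pow_of_isNilpotent hnil).eq_zero
  rw [sub_eq_zero] at hc
  have := congrArg (Polynomial.eval 1) hc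
  rw [Matrix.eval_charpoly] at this
  rw [e]
  simpa using this

theorem mt_expand {n : ℕ} (G : SimpleGraph (Fin n)) [DecidableRel G.Adj] (r : Fin n) :
    ((SimpleGraph.lapMatrix ℝ G).updateRow r (Pi.single r 1)).det =
      ∑ f ∈ Fintype.piFinset (fun v => if v = r then {r} else G.neighborFinset v),
        (mtMat r f).det := by
  have e : (SimpleGraph.lapMatrix ℝ G).updateRow r (Pi.single r 1) =
    fun v => ∑ w ∈ (if v = r then {r} else G.neighborFinset v),
      (if v = r then Pi.single r 1 else Pi.single v 1 - Pi.single w 1 : Fin n → ℝ) := by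
    ext v w
    by_cases hv : v = r
    · subst hv; simp
    · simp only [hv, if_false, Matrix.updateRow_ne (Ne.intro hv)]
      simp [SimpleGraph.lapMatrix, SimpleGraph.degMatrix, Matrix.diagonal_apply, Finset.sum_apply, Pi.single_apply,
        SimpleGraph.adjMatrix_apply, eq_comm]
  rw [e]
  exact (Matrix.detRowAlternating (n := Fin n) (R := ℝ)).toMultilinearMap.map_sum_finset _ _

theorem mt_eig {n : ℕ} (A : Matrix (Fin n) (Fin n) ℝ) (hL : A.IsHermitian)
    (hr : A.rank + 1 = n) :
    ∏ i ∈ Finset.univ.filter (fun i => hL.eigenvalues i ≠ 0), hL.eigenvalues i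
      = ∑ r, A.adjugate r r := by
  classical
  have h1 : A.adjugate.trace = ∑ i, ∏ j ∈ Finset.univ.erase i, hL.eigenvalues j := by
    conv_lhs => rw [hL.spectral_theorem, Unitary.conjStarAlgAut_apply]
    rw [adjugate_mul_distrib, adjugate_mul_distrib, ← mul_assoc, Matrix.trace_mul_comm, ← mul_assoc,
      ← adjugate_mul_distrib]
    simp [adjugate_diagonal, Matrix.trace]
  change _ = A.adjugate.trace
  rw [h1]
  rw [hL.rank_eq_card_non_zero_eigs, Fintype.card_subtype] at hr
  have h2 := Finset.card_filter_add_card_filter_not (s := (Finset.univ : Finset (Fin n))) (fun i => hL.eigenvalues i ≠ 0)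
  have h3 : (Finset.univ.filter (fun i => ¬ hL.eigenvalues i ≠ 0)).card = 1 := by
    simp at h2 hr ⊢; omega
  obtain ⟨k, hk⟩ := Finset.card_eq_one.1 h3
  have hk' : ∀ i, hL.eigenvalues i = 0 ↔ i = k := by
    intro i
    have := Finset.ext_iff.1 hk i
    simpa using this
  rw [Finset.sum_eq_single k]
  · congr 1
    ext i; simp [hk']
  · intro i _ hi
    exact Finset.prod_eq_zero (i := k) (by simp [Ne.symm hi]) ((hk' k).2 rfl)
  · simp

theorem mt_rank {n : ℕ} (G : SimpleGraph (Fin n)) [DecidableRel G.Adj] (hconn : G.Connected) :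
    (SimpleGraph.lapMatrix ℝ G).rank + 1 = n := by
  classical
  have h := G.card_connectedComponent_eq_finrank_ker_toLin'_lapMatrix
  have h1 : Fintype.card G.ConnectedComponent = 1 := by
    have := hconn.preconnected.subsingleton_connectedComponent
    have := hconn.nonempty
    obtain ⟨v⟩ := this
    exact Fintype.card_eq_one_iff.2 ⟨G.connectedComponentMk v, fun y => Subsingleton.elim _ _⟩
  have h2 := (Matrix.toLin' (SimpleGraph.lapMatrix ℝ G)).finrank_range_add_finrank_ker
  rw [Matrix.rank, ← Matrix.toLin'_apply']
  simp at h2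
  omega

def mtTree {n : ℕ} (r : Fin n) (f : Fin n → Fin n) : Finset (Sym2 (Fin n)) :=
  (Finset.univ.erase r).image (fun v => s(v, f v))

theorem mt_card {n : ℕ} (r : Fin n) (f : Fin n → Fin n) : (mtTree r f).card + 1 ≤ n := by
  have := Finset.card_image_le (s := Finset.univ.erase r) (f := fun v => s(v, f v))
  rw [Finset.card_erase_of_mem (Finset.mem_univ _), Finset.card_univ, Fintype.card_fin] at this
  have := r.pos
  unfold mtTree
  omega

theorem mt_isTree {n : ℕ} (r : Fin n) (f : Fin n → Fin n) (hne : ∀ v, v ≠ r → f v ≠ v)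
    (h : MTFlow r f) :
    (SimpleGraph.fromEdgeSet (mtTree r f : Set (Sym2 (Fin n)))).IsTree := by
  classical
  set H := SimpleGraph.fromEdgeSet (mtTree r f : Set (Sym2 (Fin n)))
  have hadj : ∀ v, v ≠ r → H.Adj v (f v) := by
    intro v hv
    refine (SimpleGraph.fromEdgeSet_adj _).2 ⟨?_, (hne v hv).symm⟩
    simp only [mtTree, Finset.mem_coe]
    exact Finset.mem_image.2 ⟨v, by simp [hv], rfl⟩
  have hreach : ∀ k v, f^[k] v = r → H.Reachable v r := by
    intro k
    induction k with
    | zero => intro v hv; simp at hv; rw [hv]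
    | succ k ih =>
      intro v hv
      by_cases hvr : v = r
      · rw [hvr]
      · exact (hadj v hvr).reachable.trans (ih (f v) (by simpa using hv))
  have hr : ∀ v, H.Reachable v r := fun v => let ⟨k, hk⟩ := h v; hreach k v hk
  have hc : H.Connected := { preconnected := fun u v => (hr u).trans (hr v).symm, nonempty := ⟨r⟩ }
  rw [SimpleGraph.isTree_iff_connected_and_card]
  refine ⟨hc, ?_⟩
  have h1 := hc.card_vert_le_card_edgeSet_add_one
  have h2 : Nat.card H.edgeSet ≤ (mtTree r f).card := by
    rw [Nat.card_coe_set_eq, ← Set.ncard_coe_finset]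
    apply Set.ncard_le_ncard _ (Finset.finite_toSet _)
    rw [SimpleGraph.edgeSet_fromEdgeSet]
    exact Set.sdiff_subset
  have h3 := mt_card r f
  simp only [Nat.card_fin] at *
  omega

theorem mt_inj {n : ℕ} (r : Fin n) (f g : Fin n → Fin n) (hf : f r = r) (hg : g r = r)
    (h : MTFlow r f) (e : mtTree r f = mtTree r g) : f = g := by
  have key : ∀ k v, f^[k] v = r → f v = g v := by
    intro k
    induction k with
    | zero => intro v hv; simp at hv; rw [hv, hf, hg]
    | succ k ih =>
      intro v hv
      by_cases hvr : v = r
      · rw [hvr, hf, hg]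
      have hw := ih (f v) (by simpa using hv)
      have hm : s(v, f v) ∈ mtTree r g := by
        rw [← e]; exact Finset.mem_image.2 ⟨v, by simp [hvr], rfl⟩
      obtain ⟨w, hwr, hw2⟩ := Finset.mem_image.1 hm
      rcases Sym2.eq_iff.1 hw2 with ⟨h1, h2⟩ | ⟨h1, h2⟩
      · rw [← h2, h1]
      · exfalso
        have hff : f (f v) = v := by rw [hw, ← h1, h2]
        have hwr' : f v ≠ r := by rw [← h1]; simpa using hwr
        have : ∀ m, f^[m] v = v ∨ f^[m] v = f v := by
          intro m
          induction m with
          | zero => left; rfl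
          | succ m ih2 =>
            rw [Function.iterate_succ_apply']
            rcases ih2 with h | h <;> rw [h]
            · right; rfl
            · left; exact hff
        rcases this (k+1) with h | h <;> rw [hv] at h
        · exact hvr h.symm
        · exact hwr' h.symm
  funext v
  obtain ⟨k, hk⟩ := h v
  exact key k v hk

theorem mt_surj {n : ℕ} (r : Fin n) (T : Finset (Sym2 (Fin n)))
    (hd : ∀ e ∈ T, ¬ e.IsDiag)
    (hT : (SimpleGraph.fromEdgeSet (T : Set (Sym2 (Fin n)))).IsTree) :
    ∃ f : Fin n → Fin n, f r = r ∧ MTFlow r f ∧ (∀ v, v ≠ r → s(v, f v) ∈ T) ∧ mtTree r f = T := by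
  classical
  set H := SimpleGraph.fromEdgeSet (T : Set (Sym2 (Fin n)))
  have hex : ∀ v, ∃ w, (v = r → w = r) ∧ (v ≠ r → H.Adj v w ∧ H.dist w r < H.dist v r) := by
    intro v
    by_cases hv : v = r
    · exact ⟨r, fun _ => rfl, fun h => absurd hv h⟩
    · obtain ⟨p, hp⟩ := hT.connected.exists_walk_length_eq_dist v r
      cases p with
      | nil => exact absurd rfl hv
      | cons hadj q =>
        refine ⟨_, fun h => absurd h hv, fun _ => ⟨hadj, ?_⟩⟩
        have := SimpleGraph.dist_le q
        simp at hp
        omega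
  choose f hf1 hf2 using hex
  have hflow : MTFlow r f := by
    have : ∀ d v, H.dist v r ≤ d → ∃ k, f^[k] v = r := by
      intro d
      induction d with
      | zero =>
        intro v hv
        by_cases hvr : v = r
        · exact ⟨0, hvr⟩
        · have := (hf2 v hvr).2; omega
      | succ d ih =>
        intro v hv
        by_cases hvr : v = r
        · exact ⟨0, hvr⟩
        · have := (hf2 v hvr).2
          obtain ⟨k, hk⟩ := ih (f v) (by omega)
          exact ⟨k+1, by simpa using hk⟩
    exact fun v => this _ v le_rfl
  have hmem : ∀ v, v ≠ r → s(v, f v) ∈ T := fun v hv => by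
    simpa using ((SimpleGraph.fromEdgeSet_adj _).1 (hf2 v hv).1).1
  refine ⟨f, hf1 r rfl, hflow, hmem, ?_⟩
  have hsub : mtTree r f ⊆ T := by
    intro e he
    obtain ⟨v, hv, rfl⟩ := Finset.mem_image.1 he
    exact hmem v (by simpa using hv)
  apply Finset.eq_of_subset_of_card_le hsub
  have ht := mt_isTree r f (fun v hv => (hf2 v hv).1.ne') hflow
  have c1 := (SimpleGraph.isTree_iff_connected_and_card.1 hT).2
  have c2 := (SimpleGraph.isTree_iff_connected_and_card.1 ht).2
  have ed : ∀ S : Finset (Sym2 (Fin n)), (∀ e ∈ S, ¬ e.IsDiag) →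
      Nat.card (SimpleGraph.fromEdgeSet (S : Set (Sym2 (Fin n)))).edgeSet = S.card := by
    intro S hS
    rw [Nat.card_coe_set_eq, ← Set.ncard_coe_finset, SimpleGraph.edgeSet_fromEdgeSet]
    congr 1
    ext e
    simp only [Set.mem_sdiff, Finset.mem_coe]
    exact ⟨fun h => h.1, fun h => ⟨h, by simpa using hS e h⟩⟩
  rw [ed _ hd] at c1
  rw [ed _ (fun e he => hd e (hsub he))] at c2
  omega

/-- **The classical matrix tree theorem (Kirchhoff).**
For a connected simple graph `G` on `n` vertices with `s` spanning trees, the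
product of the nonzero eigenvalues (with multiplicity) of the Laplacian of `G`
equals `n · s`. -/
theorem stmt2 (n : ℕ) (G : SimpleGraph (Fin n)) [DecidableRel G.Adj]
    (hconn : G.Connected)
    (s : ℕ)
    (hs : {T : Finset (Sym2 (Fin n)) | (T : Set (Sym2 (Fin n))) ⊆ G.edgeSet ∧
        (SimpleGraph.fromEdgeSet (T : Set (Sym2 (Fin n)))).IsTree}.ncard = s)
    (hL : (SimpleGraph.lapMatrix ℝ G).IsHermitian) :
    ∏ i ∈ Finset.univ.filter (fun i => hL.eigenvalues i ≠ 0), hL.eigenvalues i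
      = (n : ℝ) * (s : ℝ) := by
  classical
  rw [mt_eig _ hL (mt_rank G hconn)]
  suffices h : ∀ r, (SimpleGraph.lapMatrix ℝ G).adjugate r r = s by simp [h]
  intro r
  rw [Matrix.adjugate_apply, mt_expand]
  have hP : ∀ f, f ∈ Fintype.piFinset (fun v => if v = r then {r} else G.neighborFinset v) ↔
      f r = r ∧ ∀ v, v ≠ r → G.Adj v (f v) := by
    intro f
    rw [Fintype.mem_piFinset]
    constructor
    · intro h
      refine ⟨by simpa using h r, fun v hv => by simpa [hv] using h v⟩
    · rintro ⟨h1, h2⟩ v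
      by_cases hv : v = r
      · subst hv; simp [h1]
      · simpa [hv] using h2 v hv
  have hdet : ∀ f ∈ Fintype.piFinset (fun v => if v = r then {r} else G.neighborFinset v),
      (mtMat r f).det = if MTFlow r f then 1 else 0 := by
    intro f hf
    split_ifs with h
    · exact mt_det_one r f h
    · exact mt_det_zero r f ((hP f).1 hf).1 h
  rw [Finset.sum_congr rfl hdet, Finset.sum_boole, ← hs, ← Set.ncard_coe_finset]
  congr 1
  refine Set.ncard_congr (fun f _ => mtTree r f) ?_ ?_ ?_
  · intro f hf
    rw [Finset.mem_coe, Finset.mem_filter, hP] at hf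
    refine ⟨?_, mt_isTree r f (fun v hv => (hf.1.2 v hv).ne') hf.2⟩
    intro e he
    obtain ⟨v, hv, rfl⟩ := Finset.mem_image.1 he
    exact hf.1.2 v (by simpa using hv)
  · intro f g hf hg e
    rw [Finset.mem_coe, Finset.mem_filter, hP] at hf hg
    exact mt_inj r f g hf.1.1 hg.1.1 hf.2 e
  · rintro T ⟨hT1, hT2⟩
    obtain ⟨f, h1, h2, h3, h4⟩ := mt_surj r T
      (fun e he => G.not_isDiag_of_mem_edgeSet (hT1 he)) hT2
    refine ⟨f, ?_, h4⟩
    rw [Finset.mem_coe, Finset.mem_filter, hP]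
    exact ⟨⟨h1, fun v hv => hT1 (h3 v hv)⟩, h2⟩
end

section
/- Let M be a d×n integer matrix of rank r all of whose r×r minors lie in {-1,0,1} (a unimodular matrix). Then the subgroup of ℤⁿ generated by the rows of M equals the subgroup of ℤⁿ generated by the elementary vectors of the real row space of M. -/
/-- A vector `v` is an elementary vector of a subspace `W ⊆ ℝⁿ` if it is a
nonzero vector of `W` with all coordinates in `{-1,0,1}` whose support is
minimal (w.r.t. inclusion) among supports of nonzero vectors of `W`. -/
def IsElementaryVec {n : ℕ} (W : Submodule ℝ (Fin n → ℝ)) (v : Fin n → ℝ) : Prop :=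
  v ∈ W ∧ v ≠ 0 ∧ (∀ i, v i ∈ ({-1, 0, 1} : Set ℝ)) ∧
    ∀ w ∈ W, w ≠ 0 → {i | w i ≠ 0} ⊆ {i | v i ≠ 0} → {i | w i ≠ 0} = {i | v i ≠ 0}

lemma exists_rows_aux {d n r : ℕ} (M : Matrix (Fin d) (Fin n) ℝ) (hrank : M.rank = r) :
    ∃ f : Fin r → Fin d, Function.Injective f ∧ LinearIndependent ℝ (fun k => M (f k)) ∧
      Submodule.span ℝ (Set.range (fun k => M (f k))) =
        Submodule.span ℝ (Set.range (fun i => M i)) := by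
  rw [Matrix.rank_eq_finrank_span_row] at hrank
  have hr : Module.finrank ℝ (Submodule.span ℝ (Set.range (fun i => M i))) = r := hrank
  subst hr
  obtain ⟨F, hF, hspan, hli⟩ :=
    Submodule.exists_fun_fin_finrank_span_eq ℝ (Set.range (fun i => M i))
  choose f hf using hF
  have hfF : (fun k => M (f k)) = F := funext hf
  refine ⟨f, ?_, ?_, ?_⟩
  · intro a b hab
    apply hli.injective
    rw [← hf a, ← hf b, hab]
  · rw [hfF]; exact hli
  · rw [hfF]; exact hspan

lemma sum_mem_aux {n r : ℕ} (S : AddSubgroup (Fin n → ℝ)) (c : Fin r → ℝ)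
    (v : Fin r → Fin n → ℝ) (hc : ∀ k, ∃ z : ℤ, c k = z) (hv : ∀ k, v k ∈ S) :
    ∑ k, c k • v k ∈ S := by
  refine S.sum_mem fun k _ => ?_
  obtain ⟨z, hz⟩ := hc k
  rw [hz, Int.cast_smul_eq_zsmul]
  exact S.zsmul_mem (hv k) z

lemma tri_int {x : ℝ} (h : x ∈ ({-1, 0, 1} : Set ℝ)) : ∃ z : ℤ, x = z := by
  rcases h with h | h | h
  · exact ⟨-1, by rw [h]; simp⟩
  · exact ⟨0, by rw [h]; simp⟩
  · exact ⟨1, by rw [Set.mem_singleton_iff.1 h]; simp⟩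

lemma tri_inv {x : ℝ} (h : x ∈ ({-1, 0, 1} : Set ℝ)) : x⁻¹ ∈ ({-1, 0, 1} : Set ℝ) := by
  simp only [Set.mem_insert_iff, Set.mem_singleton_iff] at h ⊢
  rcases h with h | h | h <;> subst h <;> norm_num

lemma tri_mul {x y : ℝ} (h : x ∈ ({-1, 0, 1} : Set ℝ)) (h' : y ∈ ({-1, 0, 1} : Set ℝ)) :
    x * y ∈ ({-1, 0, 1} : Set ℝ) := by
  simp only [Set.mem_insert_iff, Set.mem_singleton_iff] at h h' ⊢
  rcases h with h | h | h <;> rcases h' with h' | h' | h' <;> subst h <;> subst h' <;> norm_num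

/-- For a rank `r` unimodular integer matrix `M`, the subgroup of `ℤⁿ`
generated by the rows of `M` coincides with the subgroup generated by the
elementary vectors (cocircuits) of the real row space of `M`. -/
theorem stmt6 (d n r : ℕ) (M : Matrix (Fin d) (Fin n) ℝ)
    (hint : ∀ i j, ∃ z : ℤ, M i j = (z : ℝ))
    (hrank : M.rank = r)
    (huni : ∀ (f : Fin r → Fin d) (g : Fin r → Fin n),
      Function.Injective f → Function.Injective g →
      (M.submatrix f g).det ∈ ({-1, 0, 1} : Set ℝ)) :
    AddSubgroup.closure (Set.range (fun i => M i)) =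
      AddSubgroup.closure
        {v : Fin n → ℝ | IsElementaryVec (Submodule.span ℝ (Set.range (fun i => M i))) v} := by
  classical
  obtain ⟨f, hfi, hfl, hfs⟩ := exists_rows_aux M hrank
  set A : Matrix (Fin r) (Fin n) ℝ := M.submatrix f id with hA
  have hAr : A.rank = r := by
    have := LinearIndependent.rank_matrix (M := A) hfl
    simpa using this
  obtain ⟨g, hgi, hgl, -⟩ := exists_rows_aux A.transpose (by rw [Matrix.rank_transpose, hAr])
  set B : Matrix (Fin r) (Fin r) ℝ := M.submatrix f g with hB
  have hBu : IsUnit B := Matrix.linearIndependent_cols_iff_isUnit.1 hgl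
  have hdet : B.det ≠ 0 := ((Matrix.isUnit_iff_isUnit_det B).1 hBu).ne_zero
  have hdt : B.det ∈ ({-1, 0, 1} : Set ℝ) := huni f g hfi hgi
  set C : Matrix (Fin r) (Fin r) ℝ := B.det⁻¹ • B.adjugate with hC
  have hBC : B * C = 1 := by
    rw [hC, Matrix.mul_smul, Matrix.mul_adjugate, smul_smul, inv_mul_cancel₀ hdet, one_smul]
  have hCB : C * B = 1 := mul_eq_one_comm.1 hBC
  have hCint : ∀ k l, ∃ z : ℤ, C k l = z := by
    choose Z hZ using hint
    have h1 : B = (Int.castRingHom ℝ).mapMatrix (Matrix.of fun k l => Z (f k) (g l)) := by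
      ext k l; simp [hB, hZ]
    have h2 : B.adjugate = (Int.castRingHom ℝ).mapMatrix
        (Matrix.of fun k l => Z (f k) (g l)).adjugate := by
      rw [RingHom.map_adjugate, ← h1]
    obtain ⟨e, he⟩ := tri_int (tri_inv hdt)
    intro k l
    refine ⟨e * (Matrix.of fun k l => Z (f k) (g l)).adjugate k l, ?_⟩
    rw [hC, Matrix.smul_apply, he, h2]
    simp
  set N : Matrix (Fin r) (Fin n) ℝ := C * A with hN
  have hNrow : ∀ k, N k = ∑ l, C k l • M (f l) := by
    intro k; ext j
    simp [hN, hA, Matrix.mul_apply, Finset.sum_apply]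
  have hNtri : ∀ k j, N k j ∈ ({-1, 0, 1} : Set ℝ) := by
    intro k j
    have h1 : N k j = B.det⁻¹ * (B.updateCol k (fun l => M (f l) j)).det := by
      rw [← Matrix.cramer_apply, Matrix.cramer_eq_adjugate_mulVec]
      simp [hN, hC, hA, Matrix.mul_apply, Matrix.mulVec, dotProduct, Finset.mul_sum, mul_assoc]
    rw [h1]
    refine tri_mul (tri_inv hdt) ?_
    have h2 : B.updateCol k (fun l => M (f l) j) = M.submatrix f (Function.update g k j) := by
      ext a b
      by_cases h : b = k
      · subst h; simp
      · simp [h, hB]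
    rw [h2]
    by_cases hi : Function.Injective (Function.update g k j)
    · exact huni f _ hfi hi
    · rw [Function.Injective] at hi
      push Not at hi
      obtain ⟨a, b, hab, hne⟩ := hi
      rw [Matrix.det_zero_of_column_eq hne (fun l => by simp only [Matrix.submatrix_apply, hab])]
      simp
  have hNg : ∀ k l, N k (g l) = if k = l then 1 else 0 := by
    intro k l
    have : N k (g l) = (C * B) k l := by
      simp [hN, hA, hB, Matrix.mul_apply]
    rw [this, hCB, Matrix.one_apply]
  set W := Submodule.span ℝ (Set.range (fun i => M i)) with hW
  have hNW : ∀ k, N k ∈ W := by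
    intro k
    rw [hNrow]
    exact W.sum_mem fun l _ => W.smul_mem _ (Submodule.subset_span ⟨f l, rfl⟩)
  have hexp : ∀ w ∈ W, w = ∑ k, w (g k) • N k := by
    intro w hw
    rw [← hfs, Submodule.mem_span_range_iff_exists_fun] at hw
    obtain ⟨c, hc⟩ := hw
    have h1 : w = Matrix.vecMul c A := by
      rw [← hc]; ext j
      simp [hA, Matrix.vecMul, dotProduct, Finset.sum_apply]
    have h2 : (fun k => w (g k)) = Matrix.vecMul c B := by
      ext k
      rw [h1]; simp [hA, hB, Matrix.vecMul, dotProduct]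
    have h3 : ∑ k, w (g k) • N k = Matrix.vecMul (fun k => w (g k)) N := by
      ext j
      simp [Matrix.vecMul, dotProduct, Finset.sum_apply]
    rw [h3, h2, hN, Matrix.vecMul_vecMul, ← Matrix.mul_assoc, hBC, Matrix.one_mul, ← h1]
  have hNel : ∀ k, IsElementaryVec W (N k) := by
    intro k
    refine ⟨hNW k, ?_, hNtri k, ?_⟩
    · intro h
      have := hNg k k
      rw [h] at this
      simp at this
    · intro w hw hw0 hsub
      have hz : ∀ l, l ≠ k → w (g l) = 0 := by
        intro l hl
        by_contra hne
        have : N k (g l) ≠ 0 := hsub hne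
        rw [hNg, if_neg (Ne.symm hl)] at this
        exact this rfl
      have hwe : w = w (g k) • N k := by
        conv_lhs => rw [hexp w hw]
        exact Finset.sum_eq_single k (fun l _ hl => by rw [hz l hl, zero_smul]) (by simp)
      have hk : w (g k) ≠ 0 := by
        intro h
        rw [h, zero_smul] at hwe
        exact hw0 hwe
      ext j
      have : w j = w (g k) * N k j := congrFun hwe j
      simp only [Set.mem_setOf_eq]
      rw [this]
      simp [hk]
  apply le_antisymm
  · rw [AddSubgroup.closure_le]
    rintro _ ⟨i, rfl⟩
    change M i ∈ AddSubgroup.closure _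
    rw [hexp (M i) (Submodule.subset_span ⟨i, rfl⟩)]
    exact sum_mem_aux _ _ _ (fun k => hint i (g k)) (fun k => AddSubgroup.subset_closure (hNel k))
  · rw [AddSubgroup.closure_le]
    intro v hv
    change v ∈ AddSubgroup.closure _
    rw [hexp v hv.1]
    refine sum_mem_aux _ _ _ (fun k => tri_int (hv.2.2.1 (g k))) (fun k => ?_)
    rw [hNrow]
    exact sum_mem_aux _ _ _ (hCint k) (fun l => AddSubgroup.subset_closure ⟨f l, rfl⟩)
end

section
/- Let M be a d×n integer matrix of full row rank d all of whose d×d minors lie in {-1,0,1} (a unimodular matrix), and let D be an n×n diagonal matrix with nonnegative integer diagonal entries. Then the Lebesgue volume of the zonotope Z(M·D) equals the Lebesgue volume of the zonotope Z(M·D·Mᵀ). -/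
open MeasureTheory

open scoped Pointwise

theorem aux_lin (g : ℕ → ℝ) (hg : ∀ k, g (k+1) + g 0 = g k + g 1) (h0 : g 0 = 0) (k : ℕ) :
    g k = k * g 1 := by
  induction k with
  | zero => simp [h0]
  | succ k ih =>
    have := hg k
    push_cast
    linarith

theorem aux_unique {n : ℕ} (d : ℕ) (h : (Fin n → ℕ) → ℝ)
    (haff : ∀ t i k, h (Function.update t i (k+1)) + h (Function.update t i 0)
      = h (Function.update t i k) + h (Function.update t i 1))
    (hhom : ∀ t, h (2 • t) = 2 ^ d * h t)
    (hS : ∀ S : Finset (Fin n), S.card = d → h (fun i => if i ∈ S then 1 else 0) = 0) :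
    ∀ (S : Finset (Fin n)) (t : Fin n → ℕ), (∀ i, i ∉ S → t i = 0) → h t = 0 := by
  intro S
  induction S using Finset.strongInduction with
  | H S ih =>
    have step : ∀ t : Fin n → ℕ, (∀ i, i ∉ S → t i = 0) → ∀ i ∈ S,
        h t = t i * h (Function.update t i 1) := by
      intro t ht i hi
      have h0 : h (Function.update t i 0) = 0 := by
        apply ih (S.erase i) (Finset.erase_ssubset hi)
        intro j hj
        by_cases hji : j = i
        · subst hji; simp
        · rw [Function.update_of_ne hji]
          apply ht
          intro hj2
          exact hj (Finset.mem_erase.2 ⟨hji, hj2⟩)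
      have := aux_lin (fun k => h (Function.update t i k)) (fun k => haff t i k) h0 (t i)
      simpa using this
    have key : ∀ U : Finset (Fin n), U ⊆ S → ∀ t : Fin n → ℕ, (∀ i, i ∉ S → t i = 0) →
        h t = (∏ i ∈ U, (t i : ℝ)) * h (fun i => if i ∈ U then 1 else t i) := by
      intro U
      induction U using Finset.induction_on with
      | empty => intro _ t _; simp
      | insert a U ha ihU =>
        intro hU t ht
        have haS : a ∈ S := hU (Finset.mem_insert_self _ _)
        rw [ihU (fun x hx => hU (Finset.mem_insert_of_mem hx)) t ht, Finset.prod_insert ha,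
          step (fun i => if i ∈ U then 1 else t i) _ a haS]
        · have : Function.update (fun i => if i ∈ U then 1 else t i) a 1
              = (fun i => if i ∈ insert a U then 1 else t i) := by
            funext j
            by_cases hja : j = a
            · subst hja; simp
            · simp [hja]
          rw [this]
          simp only [ha, if_false]
          ring
        · intro i hi
          have : i ∉ U := fun hx => hi (hU (Finset.mem_insert_of_mem hx))
          simp [this, ht i hi]
    have full : ∀ t : Fin n → ℕ, (∀ i, i ∉ S → t i = 0) →
        h t = (∏ i ∈ S, (t i : ℝ)) * h (fun i => if i ∈ S then 1 else 0) := by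
      intro t ht
      rw [key S subset_rfl t ht]
      congr 2
      funext i
      by_cases hi : i ∈ S
      · simp [hi]
      · simp [hi, ht i hi]
    have one : h (fun i => if i ∈ S then 1 else 0) = 0 := by
      by_cases hc : S.card = d
      · exact hS S hc
      · have h1 := hhom (fun i => if i ∈ S then 1 else 0)
        rw [full (2 • _) (by intro i hi; simp [hi])] at h1
        have h2 : (∏ i ∈ S, (((2 • (fun i => if i ∈ S then 1 else 0) : Fin n → ℕ) i : ℕ) : ℝ))
            = 2 ^ S.card := by
          rw [← Finset.prod_const]
          apply Finset.prod_congr rfl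
          intro i hi
          simp [hi]
        rw [h2] at h1
        by_contra hne
        have h3 := mul_right_cancel₀ hne h1
        exact hc (pow_right_injective₀ (by norm_num : (0:ℝ) < 2) (by norm_num) h3)
    intro t ht
    rw [full t ht, one, mul_zero]

theorem aux_det {d : ℕ} (A : Matrix (Fin d) (Fin d) ℝ) (u v : Fin d → ℝ) (k : ℝ) :
    (A + k • Matrix.vecMulVec u v).det
      = A.det + k * ((A + Matrix.vecMulVec u v).det - A.det) := by
  have key : ∀ k : ℝ, (A + k • Matrix.vecMulVec u v).det =
      ((Matrix.fromBlocks A 0 (-Matrix.replicateRow Unit v) 1).updateCol (Sum.inr ())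
        (k • Sum.elim u (fun _ => 0) + Sum.elim (fun _ => 0) (fun _ => 1))).det := by
    intro k
    have : ((Matrix.fromBlocks A 0 (-Matrix.replicateRow Unit v) 1).updateCol (Sum.inr ())
        (k • Sum.elim u (fun _ => 0) + Sum.elim (fun _ => 0) (fun _ => 1))) = Matrix.fromBlocks A (Matrix.replicateCol Unit (k • u))
          (-Matrix.replicateRow Unit v) 1 := by
      ext i j
      rcases i with i | i <;> rcases j with j | j <;> simp [Matrix.updateCol_apply]
    rw [this, Matrix.det_fromBlocks_one₂₂]
    congr 1
    ext i j
    simp [Matrix.vecMulVec_apply, Matrix.mul_apply]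
  have h0 := key 0
  have h1 := key 1
  have hk := key k
  rw [Matrix.det_updateCol_add, Matrix.det_updateCol_smul] at h0 h1 hk
  simp only [zero_smul, one_smul, add_zero] at h0 h1
  rw [hk, h0, h1]
  ring

theorem aux_N {d n : ℕ} (M : Matrix (Fin d) (Fin n) ℝ) (t : Fin n → ℕ) (i : Fin n) (k : ℕ) :
    M * Matrix.diagonal (fun j => ((Function.update t i k j : ℕ) : ℝ)) * M.transpose
    = M * Matrix.diagonal (fun j => ((Function.update t i 0 j : ℕ) : ℝ)) * M.transpose
      + (k : ℝ) • Matrix.vecMulVec (fun a => M a i) (fun a => M a i) := by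
  ext a b
  rw [Matrix.add_apply, Matrix.mul_apply, Matrix.mul_apply]
  simp only [Matrix.mul_diagonal, Matrix.smul_apply, Matrix.vecMulVec_apply, Matrix.transpose_apply]
  rw [← Finset.add_sum_erase _ _ (Finset.mem_univ i)]
  conv_rhs => rw [← Finset.add_sum_erase _ _ (Finset.mem_univ i)]
  have : ∀ x ∈ Finset.univ.erase i, M a x * ((Function.update t i k x : ℕ) : ℝ) * M b x
      = M a x * ((Function.update t i 0 x : ℕ) : ℝ) * M b x := by
    intro x hx
    have := Finset.ne_of_mem_erase hx
    simp [Function.update_of_ne this]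
  rw [Finset.sum_congr rfl this]
  simp
  ring

/-- image of a box -/
def boxZ {d n : ℕ} (M : Matrix (Fin d) (Fin n) ℝ) (a b : Fin n → ℝ) : Set (Fin d → ℝ) :=
  M.mulVecLin '' Set.Icc a b

theorem boxZ_compact {d n : ℕ} (M : Matrix (Fin d) (Fin n) ℝ) (a b : Fin n → ℝ) :
    IsCompact (boxZ M a b) :=
  isCompact_Icc.image (LinearMap.continuous_of_finiteDimensional _)

theorem boxZ_translate {d n : ℕ} (M : Matrix (Fin d) (Fin n) ℝ) (a b c : Fin n → ℝ) :
    volume (boxZ M (c + a) (c + b)) = volume (boxZ M a b) := by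
  have : boxZ M (c + a) (c + b) = (fun x => M.mulVecLin c + x) '' boxZ M a b := by
    unfold boxZ
    rw [← Set.image_const_add_Icc, Set.image_image, Set.image_image]
    simp [Matrix.mulVec_add]
  rw [this, Set.image_add_left, measure_preimage_add]

theorem boxZ_smul {d n : ℕ} (M : Matrix (Fin d) (Fin n) ℝ) (b : Fin n → ℝ) :
    boxZ M 0 ((2:ℝ) • b) = (2:ℝ) • boxZ M 0 b := by
  ext y
  simp only [boxZ, Set.mem_smul_set, Set.mem_image, Set.mem_Icc]
  constructor
  · rintro ⟨x, ⟨h1, h2⟩, rfl⟩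
    refine ⟨_, ⟨(1/2:ℝ) • x, ⟨?_, ?_⟩, rfl⟩, ?_⟩
    · intro i; have := h1 i; simp at this ⊢; linarith
    · intro i; have := h2 i; simp at this ⊢; linarith
    · rw [← map_smul, smul_smul]; norm_num
  · rintro ⟨_, ⟨x, ⟨h1, h2⟩, rfl⟩, rfl⟩
    refine ⟨(2:ℝ) • x, ⟨?_, ?_⟩, by rw [map_smul]⟩
    · intro i; have := h1 i; simp at this ⊢; linarith
    · intro i; have := h2 i; simp at this ⊢; linarith

theorem boxZ_rec {d n : ℕ} (M : Matrix (Fin d) (Fin n) ℝ) (t : Fin n → ℝ)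
    (i : Fin n) (k : ℝ) (hk : 0 ≤ k) :
    volume (boxZ M 0 (Function.update t i (k+1))) + volume (boxZ M 0 (Function.update t i 0))
    = volume (boxZ M 0 (Function.update t i k)) + volume (boxZ M 0 (Function.update t i 1)) := by
  have hB : volume (boxZ M (Pi.single i k) (Function.update t i (k+1)))
      = volume (boxZ M 0 (Function.update t i 1)) := by
    rw [← boxZ_translate M 0 _ (Pi.single i k)]
    congr 2
    · simp
    · funext j; by_cases hj : j = i
      · subst hj; simp
      · simp [hj]
  have hC : volume (boxZ M (Pi.single i k) (Function.update t i k))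
      = volume (boxZ M 0 (Function.update t i 0)) := by
    rw [← boxZ_translate M 0 _ (Pi.single i k)]
    congr 2
    · simp
    · funext j; by_cases hj : j = i
      · subst hj; simp
      · simp [hj]
  have hU : boxZ M 0 (Function.update t i k) ∪ boxZ M (Pi.single i k) (Function.update t i (k+1))
      = boxZ M 0 (Function.update t i (k+1)) := by
    unfold boxZ
    rw [← Set.image_union]
    congr 1
    ext x
    simp only [Set.mem_union, Set.mem_Icc, Pi.le_def]
    constructor
    · rintro (⟨h1, h2⟩ | ⟨h1, h2⟩)
      · refine ⟨h1, fun j => ?_⟩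
        have := h2 j
        by_cases hj : j = i
        · subst hj; simp at this ⊢; linarith
        · simpa [hj] using this
      · refine ⟨fun j => ?_, h2⟩
        have := h1 j
        by_cases hj : j = i
        · subst hj; simp at this ⊢; linarith
        · simpa [hj] using this
    · rintro ⟨h1, h2⟩
      rcases le_total (x i) k with h | h
      · left
        refine ⟨h1, fun j => ?_⟩
        have := h2 j
        by_cases hj : j = i
        · subst hj; simpa using h
        · simpa [hj] using this
      · right
        refine ⟨fun j => ?_, h2⟩
        have := h1 j
        by_cases hj : j = i
        · subst hj; simpa using h
        · simpa [hj] using this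
  have hI : boxZ M 0 (Function.update t i k) ∩ boxZ M (Pi.single i k) (Function.update t i (k+1))
      = boxZ M (Pi.single i k) (Function.update t i k) := by
    ext y
    constructor
    · rintro ⟨⟨x, ⟨hx1, hx2⟩, rfl⟩, ⟨z, ⟨hz1, hz2⟩, hxz⟩⟩
      have hxi : x i ≤ k := by simpa using hx2 i
      have hzi : k ≤ z i := by simpa using hz1 i
      have hmem : k ∈ segment ℝ (x i) (z i) := by
        rw [segment_eq_Icc (hxi.trans hzi)]; exact ⟨hxi, hzi⟩
      obtain ⟨p, q, hp, hq, hpq, hk'⟩ := hmem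
      refine ⟨p • x + q • z, ⟨fun j => ?_, fun j => ?_⟩, ?_⟩
      · by_cases hj : j = i
        · subst hj; simp at hk' ⊢; linarith
        · have h1 := hx1 j
          have h2 := hz1 j
          simp [hj] at h1 h2 ⊢
          positivity
      · by_cases hj : j = i
        · subst hj; simp at hk' ⊢; linarith
        · have h1 := hx2 j
          have h2 := hz2 j
          simp [hj] at h1 h2 ⊢
          calc p * x j + q * z j ≤ p * t j + q * t j := by gcongr
            _ = t j := by rw [← add_mul, hpq, one_mul]
      · rw [map_add, map_smul, map_smul, hxz, ← add_smul, hpq, one_smul]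
    · rintro ⟨x, ⟨hx1, hx2⟩, rfl⟩
      refine ⟨⟨x, ⟨fun j => ?_, hx2⟩, rfl⟩, ⟨x, ⟨hx1, fun j => ?_⟩, rfl⟩⟩
      · have := hx1 j
        by_cases hj : j = i
        · subst hj; simp at this ⊢; linarith
        · simpa [hj] using this
      · have := hx2 j
        by_cases hj : j = i
        · subst hj; simp at this ⊢; linarith
        · simpa [hj] using this
  rw [← hB, ← hC, ← hU, ← hI]
  exact measure_union_add_inter _ (boxZ_compact M _ _).measurableSet

theorem zonotope_diag {d n : ℕ} (M : Matrix (Fin d) (Fin n) ℝ) (t : Fin n → ℝ) (ht : ∀ i, 0 ≤ t i) :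
    zonotope (M * Matrix.diagonal t) = boxZ M 0 t := by
  ext y
  constructor
  · rintro ⟨x, hx, rfl⟩
    refine ⟨fun i => t i * x i, ⟨fun i => mul_nonneg (ht i) (hx i).1,
      fun i => mul_le_of_le_one_right (ht i) (hx i).2⟩, ?_⟩
    rw [Matrix.mulVecLin_apply, ← Matrix.mulVec_mulVec]
    congr 1
    funext i
    rw [Matrix.mulVec_diagonal]
  · rintro ⟨x, ⟨h1, h2⟩, rfl⟩
    refine ⟨fun i => x i / t i, fun i => ⟨div_nonneg (h1 i) (ht i),
      div_le_one_of_le₀ (h2 i) (ht i)⟩, ?_⟩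
    rw [Matrix.mulVecLin_apply, ← Matrix.mulVec_mulVec]
    congr 1
    funext i
    rw [Matrix.mulVec_diagonal]
    by_cases h : t i = 0
    · have a := h1 i
      have b := h2 i
      rw [h] at b
      simp [h, le_antisymm b a]
    · field_simp

theorem boxZ_square {d : ℕ} (A : Matrix (Fin d) (Fin d) ℝ) :
    volume (boxZ A 0 1) = ENNReal.ofReal |A.det| := by
  unfold boxZ
  rw [Measure.addHaar_image_linearMap, Real.volume_Icc_pi]
  have : LinearMap.det A.mulVecLin = A.det := by
    rw [← Matrix.toLin'_apply', LinearMap.det_toLin']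
  simp [this]

theorem zonotope_square {d : ℕ} (A : Matrix (Fin d) (Fin d) ℝ) :
    volume (zonotope A) = ENNReal.ofReal |A.det| := by
  have := zonotope_diag A 1 (by simp)
  rw [← boxZ_square, ← this]
  simp

theorem boxZ_ind {d n : ℕ} (M : Matrix (Fin d) (Fin n) ℝ) (f : Fin d → Fin n)
    (hf : Function.Injective f) (S : Finset (Fin n)) (hS : ∀ i, i ∈ S ↔ ∃ j, f j = i) :
    boxZ M 0 (fun i => (((if i ∈ S then 1 else 0 : ℕ)) : ℝ)) = boxZ (M.submatrix id f) 0 1 := by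
  have hsum : ∀ x : Fin n → ℝ, (∀ i, i ∉ S → x i = 0) →
      M.mulVec x = (M.submatrix id f).mulVec (x ∘ f) := by
    intro x hx
    funext a
    simp only [Matrix.mulVec, dotProduct, Matrix.submatrix_apply, id, Function.comp]
    symm
    apply Finset.sum_of_injOn f hf.injOn (by simp) _ (by simp)
    intro i _ hi
    rw [hx i, mul_zero]
    intro hiS
    obtain ⟨j, hj⟩ := (hS i).1 hiS
    exact hi ⟨j, by simp, hj⟩
  ext y
  constructor
  · rintro ⟨x, ⟨h1, h2⟩, rfl⟩
    refine ⟨x ∘ f, ⟨fun j => h1 (f j), fun j => ?_⟩, ?_⟩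
    · have := h2 (f j)
      simpa [(hS (f j)).2 ⟨j, rfl⟩] using this
    · simp only [Matrix.mulVecLin_apply]
      rw [← hsum]
      intro i hi
      have a := h1 i
      have b := h2 i
      simp [hi] at a b
      exact le_antisymm b a
  · rintro ⟨x, ⟨h1, h2⟩, rfl⟩
    have hc : Function.extend f x 0 ∘ f = x := by
      funext j; simp [hf.extend_apply]
    have hz : ∀ i, i ∉ S → Function.extend f x 0 i = 0 := by
      intro i hi
      rw [Function.extend_apply']
      · rfl
      · rw [← hS]; exact hi
    refine ⟨Function.extend f x 0, ⟨fun i => ?_, fun i => ?_⟩, ?_⟩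
    · by_cases hi : i ∈ S
      · obtain ⟨j, rfl⟩ := (hS i).1 hi
        rw [hf.extend_apply]; exact h1 j
      · rw [hz i hi]; simp
    · by_cases hi : i ∈ S
      · obtain ⟨j, rfl⟩ := (hS i).1 hi
        rw [hf.extend_apply]; simpa [hi] using h2 j
      · rw [hz i hi]; simp [hi]
    · simp only [Matrix.mulVecLin_apply]
      rw [hsum _ hz, hc]

theorem det_ind {d n : ℕ} (M : Matrix (Fin d) (Fin n) ℝ) (f : Fin d → Fin n)
    (hf : Function.Injective f) (S : Finset (Fin n)) (hS : ∀ i, i ∈ S ↔ ∃ j, f j = i) :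
    (M * Matrix.diagonal (fun i => (((if i ∈ S then 1 else 0 : ℕ)) : ℝ)) * M.transpose).det
      = (M.submatrix id f).det ^ 2 := by
  have : M * Matrix.diagonal (fun i => (((if i ∈ S then 1 else 0 : ℕ)) : ℝ)) * M.transpose
      = M.submatrix id f * (M.submatrix id f).transpose := by
    ext a b
    rw [Matrix.mul_apply, Matrix.mul_apply]
    simp only [Matrix.mul_diagonal, Matrix.transpose_apply, Matrix.submatrix_apply, id]
    symm
    apply Finset.sum_of_injOn f hf.injOn (by simp)
    · intro i _ hi
      have : i ∉ S := by
        intro hiS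
        obtain ⟨j, hj⟩ := (hS i).1 hiS
        exact hi ⟨j, by simp, hj⟩
      simp [this]
    · intro j _
      simp [(hS (f j)).2 ⟨j, rfl⟩]
  rw [this, Matrix.det_mul, Matrix.det_transpose, sq]

/-- For a full row rank unimodular integer matrix `M` and a diagonal matrix `D`
with nonnegative integer entries, the Lebesgue volume of `Z(M·D)` equals the
Lebesgue volume of `Z(M·D·Mᵀ)`. -/
theorem stmt9 (d n : ℕ) (M : Matrix (Fin d) (Fin n) ℝ)
    (hint : ∀ i j, ∃ z : ℤ, M i j = (z : ℝ))
    (hrank : M.rank = d)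
    (huni : ∀ f : Fin d → Fin n, Function.Injective f →
      (M.submatrix id f).det ∈ ({-1, 0, 1} : Set ℝ))
    (D : Matrix (Fin n) (Fin n) ℝ)
    (hDdiag : ∀ i j, i ≠ j → D i j = 0)
    (hDnat : ∀ i, ∃ k : ℕ, D i i = (k : ℝ)) :
    volume (zonotope (M * D)) = volume (zonotope (M * D * M.transpose)) := by
  choose t ht using hDnat
  have hD : D = Matrix.diagonal (fun i => (t i : ℝ)) := by
    ext i j
    by_cases h : i = j
    · subst h; simp [ht]
    · simp [h, hDdiag i j h]
  have hfin : ∀ s : Fin n → ℝ, volume (boxZ M 0 s) ≠ ⊤ := fun s =>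
    (boxZ_compact M 0 s).measure_lt_top.ne
  have hcast : ∀ (s : Fin n → ℕ) i (k : ℕ), (fun j => ((Function.update s i k j : ℕ) : ℝ))
      = Function.update (fun j => (s j : ℝ)) i (k : ℝ) := by
    intro s i k
    funext j
    by_cases hj : j = i
    · subst hj; simp
    · simp [hj]
  have main := aux_unique d (fun s : Fin n → ℕ => (volume (boxZ M 0 (fun i => (s i : ℝ)))).toReal
      - (M * Matrix.diagonal (fun i => (s i : ℝ)) * M.transpose).det) ?_ ?_ ?_ Finset.univ t
      (by simp)
  · have hnn : 0 ≤ (M * D * M.transpose).det := by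
      have hp : (Matrix.diagonal (fun i => (t i : ℝ))).PosSemidef :=
        Matrix.PosSemidef.diagonal (fun i => by simp)
      have := (hp.mul_mul_conjTranspose_same M).det_nonneg
      rw [hD]
      simpa using this
    rw [zonotope_square, abs_of_nonneg hnn, hD, zonotope_diag _ _ (by simp), ← sub_eq_zero.1 main,
      ENNReal.ofReal_toReal (hfin _)]
  · intro s i k
    have h1 := boxZ_rec M (fun j => (s j : ℝ)) i k (by positivity)
    have h2 := congrArg ENNReal.toReal h1
    rw [ENNReal.toReal_add (hfin _) (hfin _), ENNReal.toReal_add (hfin _) (hfin _)] at h2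
    have h3 := aux_det (M * Matrix.diagonal (fun j => ((Function.update s i 0 j : ℕ) : ℝ)) *
      M.transpose) (fun a => M a i) (fun a => M a i)
    have e1 := h3 ((k+1 : ℕ) : ℝ)
    have e2 := h3 (k : ℝ)
    have e3 := h3 ((1 : ℕ) : ℝ)
    rw [← aux_N] at e1 e2 e3
    simp only [hcast] at e1 e2 e3 ⊢
    push_cast at e1 e2 e3 ⊢
    linarith
  · intro s
    have hs : (fun i => (((2 • s) i : ℕ) : ℝ)) = (2:ℝ) • (fun i => (s i : ℝ)) := by
      funext i; simp
    have hN : M * Matrix.diagonal ((2:ℝ) • (fun i => (s i : ℝ))) * M.transpose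
        = (2:ℝ) • (M * Matrix.diagonal (fun i => (s i : ℝ)) * M.transpose) := by
      rw [Matrix.diagonal_smul, Matrix.mul_smul, Matrix.smul_mul]
    simp only [hs]
    rw [hN, Matrix.det_smul, boxZ_smul, Measure.addHaar_smul, ENNReal.toReal_mul,
      ENNReal.toReal_ofReal (abs_nonneg _)]
    simp
    ring
  · intro S hS
    let e := S.orderEmbOfFin hS
    have he : ∀ i, i ∈ S ↔ ∃ j, e j = i := by
      intro i
      have := Finset.range_orderEmbOfFin S hS
      rw [← Finset.mem_coe, ← this]; rfl
    simp only
    rw [boxZ_ind M e e.injective S he, det_ind M e e.injective S he, boxZ_square,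
      ENNReal.toReal_ofReal (abs_nonneg _)]
    rcases huni e e.injective with h | h | h <;> rw [h] <;> norm_num
end
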